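/- arXiv:1412.1896 — 4 statements merged into one kernel-verified Lean document; each statement's English description precedes it below -/
import Mathlib

section
/- Lemma 3.6: let a* := sup_{x∈ℝ} j(x) ∈ (0, ∞] be the right endpoint of the interval ℝ_j := j(ℝ). Then a* is attained by j (i.e. there exists x with j(x) = a*, equivalently G has a component of the form (a₊, ∞)) if and only if there exists c < a* with m({x ∈ ℝ : c < j(x) < a*}) < ∞. Symmetrically, the left endpoint b* := inf_{x∈ℝ} j(x) is attained (equivalently G has a component (−∞, b₋)) if and only if there exists c > b* with m({x ∈ ℝ : b* < j(x) < c}) < ∞. -/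
open MeasureTheory Set Filter

/-- The darning map `j(x) = ∫_z^x 1_F(t) dt`, `F = Gᶜ`. -/
noncomputable def jmap (G : Set ℝ) (z : ℝ) : ℝ → ℝ :=
  fun x => ∫ t in z..x, Gᶜ.indicator (fun _ => (1:ℝ)) t

theorem jmap_sub (G : Set ℝ) (hG : IsOpen G) (z x y : ℝ) (hxy : x ≤ y) :
    jmap G z y - jmap G z x = (volume (Gᶜ ∩ Ioc x y)).toReal := by
  have hm : MeasurableSet Gᶜ := hG.measurableSet.compl
  have hi : ∀ a b : ℝ, IntervalIntegrable (Gᶜ.indicator (fun _ => (1:ℝ))) volume a b := by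
    intro a b
    rw [intervalIntegrable_iff]
    apply Integrable.indicator _ hm
    rw [← IntegrableOn, ← intervalIntegrable_iff]
    exact intervalIntegrable_const
  unfold jmap
  rw [intervalIntegral.integral_interval_sub_left (hi _ _) (hi _ _),
    intervalIntegral.integral_of_le hxy, integral_indicator hm, Measure.restrict_restrict hm]
  simp [Measure.real]

theorem jmap_mono (G : Set ℝ) (hG : IsOpen G) (z : ℝ) : Monotone (jmap G z) := by
  intro x y hxy
  have h := jmap_sub G hG z x y hxy
  have : 0 ≤ (volume (Gᶜ ∩ Ioc x y)).toReal := ENNReal.toReal_nonneg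
  linarith

theorem jmap_eq (G : Set ℝ) (hG : IsOpen G) (z x y : ℝ) (hxy : x ≤ y) (h : Ioo x y ⊆ G) :
    jmap G z x = jmap G z y := by
  have h1 := jmap_sub G hG z x y hxy
  have h2 : volume (Gᶜ ∩ Ioc x y) = 0 := by
    refine measure_mono_null (t := {y}) ?_ (by simp)
    rintro t ⟨ht, h3, h4⟩
    rcases h4.lt_or_eq with h5 | h5
    · exact absurd (h ⟨h3, h5⟩) ht
    · exact h5
  rw [h2] at h1
  simp at h1
  linarith

theorem jmap_const (G : Set ℝ) (hG : IsOpen G)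
    (hFloc : ∀ x ∈ Gᶜ, ∀ δ : ℝ, 0 < δ → 0 < volume (Gᶜ ∩ Ioo (x - δ) (x + δ)))
    (z x y : ℝ) (hxy : x ≤ y) (h : jmap G z x = jmap G z y) : Ioo x y ⊆ G := by
  intro t ht
  by_contra htG
  have h1 := jmap_sub G hG z x y hxy
  have hfin : volume (Gᶜ ∩ Ioc x y) ≠ ⊤ :=
    ((measure_mono inter_subset_right).trans_lt measure_Ioc_lt_top).ne
  have h0 : volume (Gᶜ ∩ Ioc x y) = 0 := by
    have : (volume (Gᶜ ∩ Ioc x y)).toReal = 0 := by linarith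
    rcases (ENNReal.toReal_eq_zero_iff _).1 this with h | h
    · exact h
    · exact absurd h hfin
  have hδ : 0 < min (t - x) (y - t) := lt_min (by linarith [ht.1]) (by linarith [ht.2])
  have h2 := hFloc t htG _ hδ
  refine h2.ne' (measure_mono_null ?_ h0)
  rintro s ⟨hs, h3, h4⟩
  have := min_le_left (t - x) (y - t)
  have := min_le_right (t - x) (y - t)
  exact ⟨hs, by linarith, by linarith⟩

/-- Lemma 3.6: the right endpoint `a* = sup j(ℝ)` of `ℝ_j` is attained
(equivalently `G` has a component `(a₊, ∞)`) iff `m({c < j < a*}) < ∞`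
for some `c < a*`; symmetrically for the left endpoint. -/
theorem stmt_12 (G : Set ℝ) (hG : IsOpen G)
    (hdense : ∀ a b : ℝ, a < b → 0 < volume (G ∩ Ioo a b))
    (hF : 0 < volume Gᶜ)
    (hFloc : ∀ x ∈ Gᶜ, ∀ δ : ℝ, 0 < δ → 0 < volume (Gᶜ ∩ Ioo (x - δ) (x + δ)))
    (hGinf : volume G = ⊤)
    (z : ℝ) (hz : z ∈ Gᶜ)
    (hzH : (¬ ∃ c : ℝ, z < c ∧ Ioo z c ⊆ G) ∧ (¬ ∃ c : ℝ, c < z ∧ Ioo c z ⊆ G)) :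
    (((∃ x : ℝ, (jmap G z x : EReal) = ⨆ y : ℝ, (jmap G z y : EReal))
        ↔ (∃ ap : ℝ, Ioi ap ⊆ G ∧ ap ∉ G))
      ∧ ((∃ x : ℝ, (jmap G z x : EReal) = ⨆ y : ℝ, (jmap G z y : EReal))
        ↔ (∃ c : EReal, c < (⨆ y : ℝ, (jmap G z y : EReal)) ∧
            volume {x : ℝ | c < (jmap G z x : EReal) ∧
              (jmap G z x : EReal) < ⨆ y : ℝ, (jmap G z y : EReal)} < ⊤)))
    ∧ (((∃ x : ℝ, (jmap G z x : EReal) = ⨅ y : ℝ, (jmap G z y : EReal))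
        ↔ (∃ bm : ℝ, Iio bm ⊆ G ∧ bm ∉ G))
      ∧ ((∃ x : ℝ, (jmap G z x : EReal) = ⨅ y : ℝ, (jmap G z y : EReal))
        ↔ (∃ c : EReal, (⨅ y : ℝ, (jmap G z y : EReal)) < c ∧
            volume {x : ℝ | (⨅ y : ℝ, (jmap G z y : EReal)) < (jmap G z x : EReal) ∧
              (jmap G z x : EReal) < c} < ⊤))) := by
  have mono : Monotone fun y : ℝ => (jmap G z y : EReal) := fun x y h =>
    EReal.coe_le_coe_iff.2 (jmap_mono G hG z h)
  have hcl : IsClosed Gᶜ := hG.isClosed_compl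
  refine ⟨⟨⟨?_, ?_⟩, ⟨?_, ?_⟩⟩, ⟨⟨?_, ?_⟩, ⟨?_, ?_⟩⟩⟩
  · rintro ⟨x, hx⟩
    have hsub : Ioi x ⊆ G := by
      intro t ht
      have h1 : jmap G z x = jmap G z (t + 1) := by
        apply le_antisymm (jmap_mono G hG z (by linarith [mem_Ioi.1 ht]))
        rw [← EReal.coe_le_coe_iff, hx]
        exact le_iSup (fun y : ℝ => (jmap G z y : EReal)) _
      exact jmap_const G hG hFloc z x (t + 1) (by linarith [mem_Ioi.1 ht]) h1
        ⟨ht, by linarith⟩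
    have hb : BddAbove Gᶜ := ⟨x, fun t ht => by
      by_contra h
      exact ht (hsub (not_le.1 h))⟩
    refine ⟨sSup Gᶜ, fun t ht => ?_, hcl.csSup_mem ⟨z, hz⟩ hb⟩
    by_contra h
    exact absurd (le_csSup hb h) (not_le.2 ht)
  · rintro ⟨ap, hap, -⟩
    refine ⟨ap, le_antisymm (le_iSup (fun y : ℝ => (jmap G z y : EReal)) _) (iSup_le fun y => ?_)⟩
    rcases le_total y ap with h | h
    · exact mono h
    · rw [jmap_eq G hG z ap y h (fun t ht => hap ht.1)]
  · rintro ⟨x, hx⟩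
    refine ⟨(jmap G z z : EReal), ?_, ?_⟩
    · refine lt_of_le_of_ne (le_iSup (fun y : ℝ => (jmap G z y : EReal)) _) fun h => ?_
      apply hzH.1
      refine ⟨z + 1, by linarith, jmap_const G hG hFloc z z (z + 1) (by linarith) ?_⟩
      apply le_antisymm (jmap_mono G hG z (by linarith))
      rw [← EReal.coe_le_coe_iff, h]
      exact le_iSup (fun y : ℝ => (jmap G z y : EReal)) _
    · rw [← hx]
      refine (measure_mono (t := Ioo z x) ?_).trans_lt measure_Ioo_lt_top
      rintro t ⟨h1, h2⟩
      exact ⟨mono.reflect_lt h1, mono.reflect_lt h2⟩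
  · rintro ⟨c, hc, hv⟩
    by_contra hne
    obtain ⟨w, hw⟩ := lt_iSup_iff.1 hc
    refine hv.ne (top_le_iff.1 ?_)
    rw [← Real.volume_Ici (a := w)]
    refine measure_mono fun t ht => ⟨hw.trans_le (mono ht), ?_⟩
    exact lt_of_le_of_ne (le_iSup (fun y : ℝ => (jmap G z y : EReal)) _) fun h => hne ⟨t, h⟩
  · rintro ⟨x, hx⟩
    have hsub : Iio x ⊆ G := by
      intro t ht
      have h1 : jmap G z (t - 1) = jmap G z x := by
        apply le_antisymm (jmap_mono G hG z (by linarith [mem_Iio.1 ht]))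
        rw [← EReal.coe_le_coe_iff, hx]
        exact iInf_le (fun y : ℝ => (jmap G z y : EReal)) _
      exact jmap_const G hG hFloc z (t - 1) x (by linarith [mem_Iio.1 ht]) h1
        ⟨by linarith, ht⟩
    have hb : BddBelow Gᶜ := ⟨x, fun t ht => by
      by_contra h
      exact ht (hsub (not_le.1 h))⟩
    refine ⟨sInf Gᶜ, fun t ht => ?_, hcl.csInf_mem ⟨z, hz⟩ hb⟩
    by_contra h
    exact absurd (csInf_le hb h) (not_le.2 ht)
  · rintro ⟨bm, hbm, -⟩
    refine ⟨bm, le_antisymm (le_iInf fun y => ?_) (iInf_le (fun y : ℝ => (jmap G z y : EReal)) _)⟩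
    rcases le_total bm y with h | h
    · exact mono h
    · rw [jmap_eq G hG z y bm h (fun t ht => hbm ht.2)]
  · rintro ⟨x, hx⟩
    refine ⟨(jmap G z z : EReal), ?_, ?_⟩
    · refine lt_of_le_of_ne (iInf_le (fun y : ℝ => (jmap G z y : EReal)) _) fun h => ?_
      apply hzH.2
      refine ⟨z - 1, by linarith, jmap_const G hG hFloc z (z - 1) z (by linarith) ?_⟩
      apply le_antisymm (jmap_mono G hG z (by linarith))
      rw [← EReal.coe_le_coe_iff, ← h]
      exact iInf_le (fun y : ℝ => (jmap G z y : EReal)) _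
    · rw [← hx]
      refine (measure_mono (t := Ioo x z) ?_).trans_lt measure_Ioo_lt_top
      rintro t ⟨h1, h2⟩
      exact ⟨mono.reflect_lt h1, mono.reflect_lt h2⟩
  · rintro ⟨c, hc, hv⟩
    by_contra hne
    obtain ⟨w, hw⟩ := iInf_lt_iff.1 hc
    refine hv.ne (top_le_iff.1 ?_)
    rw [← Real.volume_Iic (a := w)]
    refine measure_mono fun t ht => ⟨?_, (mono ht).trans_lt hw⟩
    exact lt_of_le_of_ne (iInf_le (fun y : ℝ => (jmap G z y : EReal)) _) fun h => hne ⟨t, h.symm⟩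
end

section
/- Regularization of the measure-dense set: let G ⊆ ℝ be open, F := ℝ ∖ G, f(x) := ∫₀ˣ 1_F(t) dt, and G̃ := {x ∈ ℝ : there exists δ > 0 with f(x+δ) = f(x−δ)}. Then G̃ is open, G ⊆ G̃, m(G̃ ∖ G) = 0 (so G̃ is an a.e. version of G), and F̃ := ℝ ∖ G̃ satisfies m(F̃ ∩ (x−δ, x+δ)) > 0 for every x ∈ F̃ and δ > 0; in particular F̃ has no isolated points. -/
open MeasureTheory Set Filter

/-- `f(x) = ∫₀ˣ 1_F(t) dt` with `F = Gᶜ` (signed integral). -/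
noncomputable def freg (G : Set ℝ) : ℝ → ℝ :=
  fun x => ∫ t in (0:ℝ)..x, Gᶜ.indicator (fun _ => (1:ℝ)) t

/-- `G̃ = {x : ∃ δ > 0, f(x+δ) = f(x−δ)}`. -/
def Gtilde (G : Set ℝ) : Set ℝ :=
  {x : ℝ | ∃ δ : ℝ, 0 < δ ∧ freg G (x + δ) = freg G (x - δ)}

theorem freg_mem_iff (G : Set ℝ) (hG : IsOpen G) (x : ℝ) :
    x ∈ Gtilde G ↔ ∃ δ : ℝ, 0 < δ ∧ volume (Gᶜ ∩ Ioo (x - δ) (x + δ)) = 0 := by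
  have hm : MeasurableSet Gᶜ := hG.measurableSet.compl
  have hint : ∀ a b : ℝ, IntervalIntegrable (Gᶜ.indicator (fun _ => (1:ℝ))) volume a b := by
    intro a b
    rw [intervalIntegrable_iff]
    exact (integrableOn_const (by simp [uIoc]) (by simp)).indicator hm
  have key : ∀ δ : ℝ, 0 < δ → (freg G (x + δ) = freg G (x - δ) ↔
      volume (Gᶜ ∩ Ioo (x - δ) (x + δ)) = 0) := by
    intro δ hδ
    have h1 : freg G (x + δ) - freg G (x - δ) = volume.real (Gᶜ ∩ Ioc (x - δ) (x + δ)) := by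
      unfold freg
      rw [intervalIntegral.integral_interval_sub_left (hint _ _) (hint _ _),
        intervalIntegral.integral_of_le (by linarith), integral_indicator hm,
        Measure.restrict_restrict hm]
      simp
    have h2 : volume (Gᶜ ∩ Ioo (x - δ) (x + δ)) = volume (Gᶜ ∩ Ioc (x - δ) (x + δ)) :=
      measure_congr ((ae_eq_refl _).inter Ioo_ae_eq_Ioc)
    have h3 : volume (Gᶜ ∩ Ioc (x - δ) (x + δ)) ≠ ⊤ :=
      ((measure_mono inter_subset_right).trans_lt (by simp)).ne
    rw [h2, ← sub_eq_zero, h1, measureReal_eq_zero_iff h3]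
  constructor
  · rintro ⟨δ, h, hh⟩
    exact ⟨δ, h, (key δ h).1 hh⟩
  · rintro ⟨δ, h, hh⟩
    exact ⟨δ, h, (key δ h).2 hh⟩

/-- Regularization of the measure-dense set: `G̃` is an open a.e. version of `G`
whose complement `F̃` has locally positive measure at each of its points; in
particular `F̃` has no isolated points. -/
theorem stmt_15 (G : Set ℝ) (hG : IsOpen G) :
    IsOpen (Gtilde G)
    ∧ G ⊆ Gtilde G
    ∧ volume (Gtilde G \ G) = 0
    ∧ (∀ x ∈ (Gtilde G)ᶜ, ∀ δ : ℝ, 0 < δ →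
        0 < volume ((Gtilde G)ᶜ ∩ Ioo (x - δ) (x + δ)))
    ∧ (∀ x ∈ (Gtilde G)ᶜ, ∀ δ : ℝ, 0 < δ →
        ∃ y ∈ (Gtilde G)ᶜ, y ≠ x ∧ |y - x| < δ) := by
  have hsub : G ⊆ Gtilde G := by
    intro x hx
    rw [freg_mem_iff G hG]
    obtain ⟨δ, hδ, h⟩ := Metric.isOpen_iff.1 hG x hx
    refine ⟨δ, hδ, ?_⟩
    rw [Real.ball_eq_Ioo] at h
    have : Gᶜ ∩ Ioo (x - δ) (x + δ) = ∅ := by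
      ext y
      simp only [mem_inter_iff, mem_empty_iff_false, iff_false, not_and]
      exact fun h1 h2 => h1 (h h2)
    simp [this]
  have hnull : volume (Gtilde G \ G) = 0 := by
    refine measure_null_of_locally_null _ ?_
    rintro x ⟨hx, -⟩
    obtain ⟨δ, hδ, h⟩ := (freg_mem_iff G hG x).1 hx
    refine ⟨(Gtilde G \ G) ∩ Ioo (x - δ) (x + δ), inter_mem self_mem_nhdsWithin
      (mem_nhdsWithin_of_mem_nhds (Ioo_mem_nhds (by linarith) (by linarith))), ?_⟩
    refine measure_mono_null ?_ h
    rintro y ⟨⟨_, h1⟩, h2⟩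
    exact ⟨h1, h2⟩
  have hpos : ∀ x ∈ (Gtilde G)ᶜ, ∀ δ : ℝ, 0 < δ →
        0 < volume ((Gtilde G)ᶜ ∩ Ioo (x - δ) (x + δ)) := by
    intro x hx δ hδ
    rw [pos_iff_ne_zero]
    intro h0
    apply hx
    rw [freg_mem_iff G hG]
    refine ⟨δ, hδ, measure_mono_null ?_ (measure_union_null h0 hnull)⟩
    rintro y ⟨h1, h2⟩
    by_cases hy : y ∈ Gtilde G
    · exact Or.inr ⟨hy, h1⟩
    · exact Or.inl ⟨hy, h2⟩
  refine ⟨?_, hsub, hnull, hpos, ?_⟩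
  · rw [Metric.isOpen_iff]
    intro x hx
    obtain ⟨δ, hδ, h⟩ := (freg_mem_iff G hG x).1 hx
    refine ⟨δ, hδ, ?_⟩
    rw [Real.ball_eq_Ioo]
    rintro y hy
    rw [freg_mem_iff G hG]
    obtain ⟨ε, hε, hh⟩ := Metric.isOpen_iff.1 isOpen_Ioo y hy
    rw [Real.ball_eq_Ioo] at hh
    exact ⟨ε, hε, measure_mono_null (inter_subset_inter_right _ hh) h⟩
  · intro x hx δ hδ
    by_contra! hc
    refine (hpos x hx δ hδ).ne' (measure_mono_null ?_ (Real.volume_singleton (a := x)))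
    rintro y ⟨h1, h2⟩
    by_contra hne
    have := hc y h1 hne
    have h3 : |y - x| < δ := abs_lt.2 ⟨by linarith [h2.1], by linarith [h2.2]⟩
    linarith
end

section
/- Nonexistence of an open version: if J ⊆ ℝ is a Lebesgue measurable set such that 0 < m(J ∩ I) < m(I) for every nonempty bounded open interval I, then there is no open set G ⊆ ℝ with m(J Δ G) = 0 (where Δ denotes symmetric difference). -/
open MeasureTheory Set

/-- Nonexistence of an open version: if `0 < m(J ∩ I) < m(I)` for every nonempty
bounded open interval `I`, then `J` has no open a.e. version. -/
theorem stmt_16 (J : Set ℝ) (hJ : MeasurableSet J)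
    (h : ∀ a b : ℝ, a < b →
      0 < volume (J ∩ Ioo a b) ∧ volume (J ∩ Ioo a b) < volume (Ioo a b)) :
    ¬ ∃ G : Set ℝ, IsOpen G ∧ volume (symmDiff J G) = 0 := by
  rintro ⟨G, hG, h0⟩
  have hae : J =ᵐ[volume] G := measure_symmDiff_eq_zero_iff.mp h0
  have key : ∀ a b : ℝ, volume (J ∩ Ioo a b) = volume (G ∩ Ioo a b) := fun a b =>
    measure_congr (hae.inter (Filter.EventuallyEq.refl _ _))
  rcases G.eq_empty_or_nonempty with rfl | ⟨x, hx⟩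
  · have h1 := (h 0 1 one_pos).1
    rw [key] at h1
    simp at h1
  · obtain ⟨a, b, hab, hsub⟩ := mem_nhds_iff_exists_Ioo_subset.mp (hG.mem_nhds hx)
    have h1 := (h a b (hab.1.trans hab.2)).2
    rw [key, inter_eq_right.mpr hsub] at h1
    exact lt_irrefl _ h1
end

section
/- Feller measure computation (limit appearing in the proof of Theorem 2.6): for all real a < b, lim_{α→∞} α ∫_a^b [sinh(√(2α)(b−x)) / sinh(√(2α)(b−a))] · [(x−a)/(b−a)] dx = 1/(2(b−a)). -/
open MeasureTheory Set Filter

lemma aux_int (a b k : ℝ) (hab : a < b) (hk : 0 < k) :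
    ∫ x in a..b, (Real.sinh (k * (b - x)) / Real.sinh (k * (b - a))) * ((x - a) / (b - a))
      = 1 / (k ^ 2 * (b - a)) - 1 / (k * Real.sinh (k * (b - a))) := by
  have hL : 0 < b - a := sub_pos.2 hab
  have hS : 0 < Real.sinh (k * (b - a)) := Real.sinh_pos_iff.2 (mul_pos hk hL)
  have hd : ∀ x ∈ uIcc a b, HasDerivAt (fun x : ℝ =>
      (-((x - a) * Real.cosh (k * (b - x)) / k) - Real.sinh (k * (b - x)) / k ^ 2)
        / (Real.sinh (k * (b - a)) * (b - a)))
      ((Real.sinh (k * (b - x)) / Real.sinh (k * (b - a))) * ((x - a) / (b - a))) x := by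
    intro x _
    have h1 : HasDerivAt (fun x : ℝ => k * (b - x)) (k * (-1)) x :=
      ((hasDerivAt_id x).const_sub b).const_mul k
    have h2 : HasDerivAt (fun x : ℝ => x - a) 1 x := (hasDerivAt_id x).sub_const a
    have h3 := ((((h2.mul h1.cosh).div_const k).neg).sub (h1.sinh.div_const (k ^ 2))).div_const
      (Real.sinh (k * (b - a)) * (b - a))
    refine h3.congr_deriv ?_
    field_simp
    ring
  rw [intervalIntegral.integral_eq_sub_of_hasDerivAt hd]
  · simp only [sub_self, mul_zero, Real.cosh_zero, Real.sinh_zero, zero_mul, zero_div]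
    field_simp
    ring
  · apply Continuous.intervalIntegrable
    fun_prop

/-- The Feller measure limit from the proof of Theorem 2.6:
`lim_{α→∞} α ∫_a^b sinh(√(2α)(b−x))/sinh(√(2α)(b−a)) · (x−a)/(b−a) dx = 1/(2(b−a))`. -/
theorem stmt_19 (a b : ℝ) (hab : a < b) :
    Tendsto (fun α : ℝ =>
        α * ∫ x in a..b,
          (Real.sinh (Real.sqrt (2 * α) * (b - x))
              / Real.sinh (Real.sqrt (2 * α) * (b - a))) * ((x - a) / (b - a)))
      atTop (nhds (1 / (2 * (b - a)))) := by
  have hL : 0 < b - a := sub_pos.2 hab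
  have hk : Tendsto (fun α : ℝ => Real.sqrt (2 * α)) atTop atTop :=
    Real.tendsto_sqrt_atTop.comp (tendsto_id.const_mul_atTop (by norm_num))
  have h0 : Tendsto (fun k : ℝ => k / (2 * Real.sinh (k * (b - a)))) atTop (nhds 0) := by
    have hu : Tendsto (fun k : ℝ => (2 / (b - a) ^ 2) * k⁻¹) atTop (nhds 0) := by
      have h := (tendsto_inv_atTop_zero (𝕜 := ℝ)).const_mul (2 / (b - a) ^ 2)
      rwa [mul_zero] at h
    refine tendsto_of_tendsto_of_tendsto_of_le_of_le' tendsto_const_nhds hu ?_ ?_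
    · filter_upwards [eventually_gt_atTop 0] with k hk
      have hS : 0 < Real.sinh (k * (b - a)) := Real.sinh_pos_iff.2 (mul_pos hk hL)
      positivity
    · filter_upwards [eventually_gt_atTop 0] with k hk
      have hy : 0 < k * (b - a) := mul_pos hk hL
      have hS : 0 < Real.sinh (k * (b - a)) := Real.sinh_pos_iff.2 hy
      have h1 : (k * (b - a)) ^ 2 / 4 ≤ Real.sinh (k * (b - a)) := by
        rw [Real.sinh_eq]
        have := Real.quadratic_le_exp_of_nonneg hy.le
        have : Real.exp (-(k * (b - a))) ≤ 1 := Real.exp_le_one_iff.2 (by linarith)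
        linarith
      have e : (2 / (b - a) ^ 2) * k⁻¹ = k / (2 * ((k * (b - a)) ^ 2 / 4)) := by
        field_simp
        norm_num
      rw [e]
      gcongr
  have h2 := (h0.comp hk).const_sub (1 / (2 * (b - a)))
  rw [sub_zero] at h2
  refine h2.congr' ?_
  filter_upwards [eventually_gt_atTop 0] with α hα
  have hkp : 0 < Real.sqrt (2 * α) := Real.sqrt_pos.2 (by linarith)
  rw [aux_int a b _ hab hkp]
  have hsq : Real.sqrt (2 * α) ^ 2 = 2 * α := Real.sq_sqrt (by linarith)
  simp only [Function.comp]
  generalize Real.sqrt (2 * α) = k at *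
  have hS : 0 < Real.sinh (k * (b - a)) := Real.sinh_pos_iff.2 (mul_pos hkp hL)
  obtain rfl : α = k ^ 2 / 2 := by linarith
  field_simp
end
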